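/- The natural-norm lower bound translates into a lower bound for the inf-sup constant: if β(μ̄) := inf_{w≠0} ‖T̄ w‖/‖w‖ > 0, then β(μ̄) · β̄_μ̄(μ) ≤ β(μ), where β̄_μ̄(μ) := inf_{w≠0} ⟪T w, T̄ w⟫/‖T̄ w‖² and β(μ) := inf_{w≠0} ‖T w‖/‖w‖. -/

import Mathlib

/-!
By Cauchy–Schwarz, `⟪T w, T̄ w⟫ / ‖T̄ w‖² ≤ ‖T w‖ / ‖T̄ w‖`, and multiplying by `‖T̄ w‖ / ‖w‖` gives
`‖T w‖ / ‖w‖`; so for every `w ≠ 0` the product of the two infima is at most `‖T w‖ / ‖w‖`, provided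
the second infimum is positive. If it is nonpositive, the left-hand side is nonpositive and the
right-hand side is not negative. Positivity of the first infimum guarantees that `X` is nontrivial
and that `T̄ w ≠ 0`.
-/

open scoped RealInnerProductSpace

/-- The natural-norm lower bound translates into a lower bound for the inf-sup constant:
if `β(μ̄) = inf_{w≠0} ‖T̄ w‖/‖w‖ > 0` then `β(μ̄) · β̄_μ̄(μ) ≤ β(μ)`. -/
theorem naturalNorm_lowerBound_translates
    {X : Type*} [NormedAddCommGroup X] [InnerProductSpace ℝ X] [CompleteSpace X]
    (T Tbar : X →L[ℝ] X)
    (hβ : 0 < ⨅ w : {w : X // w ≠ 0}, ‖Tbar w.1‖ / ‖w.1‖) :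
    (⨅ w : {w : X // w ≠ 0}, ‖Tbar w.1‖ / ‖w.1‖) *
        (⨅ w : {w : X // w ≠ 0}, ⟪T w.1, Tbar w.1⟫ / ‖Tbar w.1‖ ^ 2) ≤
      ⨅ w : {w : X // w ≠ 0}, ‖T w.1‖ / ‖w.1‖ := by
  have hne : Nonempty {w : X // w ≠ 0} := by
    by_contra h
    rw [not_nonempty_iff] at h
    rw [Real.iInf_of_isEmpty] at hβ
    exact lt_irrefl _ hβ
  set b := ⨅ w : {w : X // w ≠ 0}, ‖Tbar w.1‖ / ‖w.1‖ with hb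
  set c := ⨅ w : {w : X // w ≠ 0}, ⟪T w.1, Tbar w.1⟫ / ‖Tbar w.1‖ ^ 2 with hc
  refine le_ciInf fun w => ?_
  rcases le_or_gt c 0 with hc0 | hc0
  · exact (mul_nonpos_of_nonneg_of_nonpos hβ.le hc0).trans (by positivity)
  -- An infimum over a family unbounded below is `0` by convention, so `0 < c` forces boundedness.
  have hbdd : BddBelow (Set.range fun w : {w : X // w ≠ 0} =>
      ⟪T w.1, Tbar w.1⟫ / ‖Tbar w.1‖ ^ 2) := by
    by_contra h
    rw [hc, Real.iInf_of_not_bddBelow h] at hc0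
    exact lt_irrefl _ hc0
  have hcw : c ≤ ⟪T w.1, Tbar w.1⟫ / ‖Tbar w.1‖ ^ 2 := ciInf_le hbdd w
  have hbw : b ≤ ‖Tbar w.1‖ / ‖w.1‖ :=
    ciInf_le ⟨0, by rintro _ ⟨v, rfl⟩; positivity⟩ w
  have hw : 0 < ‖w.1‖ := norm_pos_iff.2 w.2
  have ht : 0 < ‖Tbar w.1‖ := (div_pos_iff_of_pos_right hw).1 (hβ.trans_le hbw)
  calc b * c ≤ (‖Tbar w.1‖ / ‖w.1‖) * (⟪T w.1, Tbar w.1⟫ / ‖Tbar w.1‖ ^ 2) :=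
        mul_le_mul hbw hcw hc0.le (by positivity)
    _ ≤ (‖Tbar w.1‖ / ‖w.1‖) * (‖T w.1‖ * ‖Tbar w.1‖ / ‖Tbar w.1‖ ^ 2) := by
        gcongr
        exact real_inner_le_norm _ _
    _ = ‖T w.1‖ / ‖w.1‖ := by field_simp
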